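/- Let Z₁ and Z₂ be independent random variables on a probability space, each standard normally distributed (law gaussianReal 0 1). Let μ₁, μ₂ ∈ ℝ, σ₁, σ₂ > 0, ρ ∈ (-1,1), and define X₁ = μ₁ + σ₁·Z₁ and X₂ = μ₂ + σ₂·(ρ·Z₁ + √(1-ρ²)·Z₂), so that (X₁,X₂) is bivariate Gaussian with means (μ₁,μ₂), variances (σ₁²,σ₂²) and correlation ρ. Set θ = √(σ₁² + σ₂² − 2ρσ₁σ₂) (assumed positive) and δ = (μ₂ − μ₁)/θ, and let Y = min{X₁, X₂}. Then E[Y] = μ₁·Φ(δ) + μ₂·Φ(−δ) − θ·φ(δ), where φ and Φ denote the probability density function and cumulative distribution function of the standard normal distribution. -/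

import Mathlib

open MeasureTheory ProbabilityTheory

/-- The standard normal probability density function `φ`. -/
noncomputable def stdNormalPdf (x : ℝ) : ℝ :=
  (Real.sqrt (2 * Real.pi))⁻¹ * Real.exp (-x ^ 2 / 2)

/-- The standard normal cumulative distribution function `Φ`. -/
noncomputable def stdNormalCdf (x : ℝ) : ℝ :=
  ∫ t in Set.Iic x, stdNormalPdf t

lemma stdNormalPdf_eq_aux (x : ℝ) : stdNormalPdf x = gaussianPDFReal 0 1 x := by
  simp [stdNormalPdf, gaussianPDFReal]

lemma integrable_stdNormalPdf_aux : Integrable stdNormalPdf := by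
  have h : stdNormalPdf = gaussianPDFReal 0 1 := funext stdNormalPdf_eq_aux
  rw [h]; exact integrable_gaussianPDFReal 0 1

lemma stdNormalCdf_neg_aux (x : ℝ) : stdNormalCdf (-x) = 1 - stdNormalCdf x := by
  have h1 : stdNormalCdf (-x) = ∫ t in Set.Ioi x, stdNormalPdf t := by
    have := integral_comp_neg_Ioi x stdNormalPdf
    rw [stdNormalCdf, ← this]
    simp [stdNormalPdf]
  have h2 : ∫ t, stdNormalPdf t = 1 := by
    simp_rw [stdNormalPdf_eq_aux]
    exact integral_gaussianPDFReal_eq_one 0 one_ne_zero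
  have h3 := intervalIntegral.integral_Iic_add_Ioi (b := x)
    integrable_stdNormalPdf_aux.integrableOn integrable_stdNormalPdf_aux.integrableOn
  rw [h2] at h3
  rw [h1, stdNormalCdf]
  linarith

lemma integrable_mul_stdNormalPdf_aux : Integrable (fun x => x * stdNormalPdf x) := by
  have h := (integrable_mul_exp_neg_mul_sq (b := 1 / 2) (by norm_num)).const_mul
    (Real.sqrt (2 * Real.pi))⁻¹
  refine h.congr (Filter.Eventually.of_forall fun x => ?_)
  simp only [stdNormalPdf]
  rw [show -x ^ 2 / 2 = -(1 / 2) * x ^ 2 by ring]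
  ring

lemma integral_mul_stdNormalPdf_aux (d : ℝ) :
    ∫ x in Set.Iic d, x * stdNormalPdf x = - stdNormalPdf d := by
  have hd : ∀ x ∈ Set.Iic d, HasDerivAt (fun x => - stdNormalPdf x) (x * stdNormalPdf x) x := by
    intro x _
    have h1 : HasDerivAt (fun x : ℝ => -x ^ 2 / 2) (-x) x := by
      have := ((hasDerivAt_id x).pow 2).neg.div_const 2
      convert! this using 1
      simp only [id, Nat.cast_ofNat]
      ring
    have h2 := (h1.exp.const_mul (Real.sqrt (2 * Real.pi))⁻¹).neg
    convert! h2 using 1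
    simp only [stdNormalPdf]
    ring
  have ht : Filter.Tendsto (fun x => - stdNormalPdf x) Filter.atBot (nhds 0) := by
    have h1 : Filter.Tendsto (fun x : ℝ => x ^ 2 / 2) Filter.atBot Filter.atTop := by
      have := (Filter.tendsto_pow_atTop (α := ℝ) (n := 2) two_ne_zero).comp
        Filter.tendsto_neg_atBot_atTop
      have h2 := this.atTop_div_const (r := (2 : ℝ)) two_pos
      refine h2.congr fun x => ?_
      simp
    have h3 := ((Real.tendsto_exp_neg_atTop_nhds_zero.comp h1).const_mul
      (Real.sqrt (2 * Real.pi))⁻¹).neg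
    simp only [mul_zero, neg_zero] at h3
    refine h3.congr fun x => ?_
    simp [stdNormalPdf, neg_div]
  have := integral_Iic_of_hasDerivAt_of_tendsto' hd
    integrable_mul_stdNormalPdf_aux.integrableOn ht
  simpa using this

lemma integral_min_gaussian_aux (d : ℝ) :
    ∫ x, min (x - d) 0 ∂(gaussianReal 0 1) = - stdNormalPdf d - d * stdNormalCdf d := by
  rw [integral_gaussianReal_eq_integral_smul one_ne_zero]
  have h : ∀ x, gaussianPDFReal 0 1 x • min (x - d) 0
      = (Set.Iic d).indicator (fun x => x * stdNormalPdf x - d * stdNormalPdf x) x := by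
    intro x
    rw [← stdNormalPdf_eq_aux, smul_eq_mul]
    by_cases hx : x ≤ d
    · rw [Set.indicator_of_mem (by exact hx), min_eq_left (by linarith)]
      ring
    · rw [Set.indicator_of_notMem (by exact hx), min_eq_right (by linarith), mul_zero]
  simp_rw [h]
  rw [integral_indicator measurableSet_Iic, integral_sub
    integrable_mul_stdNormalPdf_aux.integrableOn
    (integrable_stdNormalPdf_aux.const_mul d).integrableOn, integral_mul_stdNormalPdf_aux,
    integral_const_mul, stdNormalCdf]

lemma lincomb_gaussian_aux {Ω : Type*} [MeasureSpace Ω] [IsProbabilityMeasure (ℙ : Measure Ω)]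
    (Z₁ Z₂ : Ω → ℝ) (hZ₁m : Measurable Z₁) (hZ₂m : Measurable Z₂)
    (hZ₁ : Measure.map Z₁ ℙ = gaussianReal 0 1)
    (hZ₂ : Measure.map Z₂ ℙ = gaussianReal 0 1)
    (hindep : IndepFun Z₁ Z₂ ℙ) (a b : ℝ) (hab : a ^ 2 + b ^ 2 = 1) :
    Measure.map (fun ω => a * Z₁ ω + b * Z₂ ω) ℙ = gaussianReal 0 1 := by
  have h1 := (gaussianReal_const_mul (P := ℙ) ⟨hZ₁m.aemeasurable, hZ₁⟩ a).map_eq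
  have h2 := (gaussianReal_const_mul (P := ℙ) ⟨hZ₂m.aemeasurable, hZ₂⟩ b).map_eq
  have hi : IndepFun (fun ω => a * Z₁ ω) (fun ω => b * Z₂ ω) ℙ :=
    hindep.comp (measurable_const_mul a) (measurable_const_mul b)
  have h3 := gaussianReal_add_gaussianReal_of_indepFun hi h1 h2
  convert! h3 using 2
  · simp
  · apply NNReal.eq
    simp [hab]

/-- The expected value of the minimum of two jointly Gaussian random variables:
`E[Y] = μ₁·Φ(δ) + μ₂·Φ(−δ) − θ·φ(δ)`. -/
theorem mean_min_bivariate_gaussian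
    {Ω : Type*} [MeasureSpace Ω] [IsProbabilityMeasure (ℙ : Measure Ω)]
    (Z₁ Z₂ : Ω → ℝ) (hZ₁m : Measurable Z₁) (hZ₂m : Measurable Z₂)
    (hZ₁ : Measure.map Z₁ ℙ = gaussianReal 0 1)
    (hZ₂ : Measure.map Z₂ ℙ = gaussianReal 0 1)
    (hindep : IndepFun Z₁ Z₂ ℙ)
    (μ₁ μ₂ σ₁ σ₂ ρ : ℝ) (hσ₁ : 0 < σ₁) (hσ₂ : 0 < σ₂)
    (hρ : ρ ∈ Set.Ioo (-1 : ℝ) 1)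
    (X₁ X₂ Y : Ω → ℝ)
    (hX₁ : X₁ = fun ω => μ₁ + σ₁ * Z₁ ω)
    (hX₂ : X₂ = fun ω => μ₂ + σ₂ * (ρ * Z₁ ω + Real.sqrt (1 - ρ ^ 2) * Z₂ ω))
    (hY : Y = fun ω => min (X₁ ω) (X₂ ω))
    (θ δ : ℝ)
    (hθ : θ = Real.sqrt (σ₁ ^ 2 + σ₂ ^ 2 - 2 * ρ * σ₁ * σ₂))
    (hθpos : 0 < θ)
    (hδ : δ = (μ₂ - μ₁) / θ) :
    ∫ ω, Y ω = μ₁ * stdNormalCdf δ + μ₂ * stdNormalCdf (-δ) - θ * stdNormalPdf δ := by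
  have hmean : ∀ Z : Ω → ℝ, Measurable Z → Measure.map Z ℙ = gaussianReal 0 1 →
      Integrable Z ∧ ∫ ω, Z ω = 0 := by
    intro Z hm hl
    have hid : Integrable (fun x : ℝ => x) (Measure.map Z ℙ) := by
      rw [hl]
      exact (memLp_id_gaussianReal 1).integrable (by simp)
    refine ⟨(integrable_map_measure (by fun_prop) hm.aemeasurable).1 hid, ?_⟩
    have := integral_map hm.aemeasurable (f := fun x : ℝ => x) (μ := ℙ) (by fun_prop)
    rw [← this, hl, integral_id_gaussianReal]
  obtain ⟨hi1, hm1⟩ := hmean Z₁ hZ₁m hZ₁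
  obtain ⟨hi2, hm2⟩ := hmean Z₂ hZ₂m hZ₂
  set s := Real.sqrt (1 - ρ ^ 2) with hs
  have hs2 : s ^ 2 = 1 - ρ ^ 2 := Real.sq_sqrt (by nlinarith [hρ.1, hρ.2])
  have hθ2 : θ ^ 2 = σ₁ ^ 2 + σ₂ ^ 2 - 2 * ρ * σ₁ * σ₂ := by
    rw [hθ]
    apply Real.sq_sqrt
    nlinarith [sq_nonneg (σ₁ - ρ * σ₂), mul_nonneg (sq_nonneg σ₂) (sq_nonneg s)]
  have hθ0 : θ ≠ 0 := hθpos.ne'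
  set a := (σ₁ - σ₂ * ρ) / θ with ha
  set b := -(σ₂ * s) / θ with hb
  have hab : a ^ 2 + b ^ 2 = 1 := by
    rw [ha, hb, div_pow, div_pow, ← add_div, div_eq_one_iff_eq (pow_ne_zero 2 hθ0), hθ2]
    linear_combination σ₂ ^ 2 * hs2
  have haθ : θ * a = σ₁ - σ₂ * ρ := by rw [ha]; field_simp
  have hbθ : θ * b = -(σ₂ * s) := by rw [hb]; field_simp
  have hδθ : θ * δ = μ₂ - μ₁ := by rw [hδ]; field_simp
  set W : Ω → ℝ := fun ω => a * Z₁ ω + b * Z₂ ω with hW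
  have hWl : Measure.map W ℙ = gaussianReal 0 1 :=
    lincomb_gaussian_aux Z₁ Z₂ hZ₁m hZ₂m hZ₁ hZ₂ hindep a b hab
  have hWm : Measurable W := by fun_prop
  obtain ⟨hiW, -⟩ := hmean W hWm hWl
  have hYe : ∀ ω, Y ω = (μ₂ + (σ₂ * ρ * Z₁ ω + σ₂ * s * Z₂ ω)) + θ * min (W ω - δ) 0 := by
    intro ω
    have e : θ * (W ω - δ) = X₁ ω - X₂ ω := by
      simp only [hW, hX₁, hX₂]
      linear_combination Z₁ ω * haθ + Z₂ ω * hbθ - hδθ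
    rw [mul_min_of_nonneg _ _ hθpos.le, e, mul_zero, hY]
    have e2 : μ₂ + (σ₂ * ρ * Z₁ ω + σ₂ * s * Z₂ ω) = X₂ ω := by
      simp only [hX₂]; ring
    rw [e2, ← min_add_add_left]
    simp
  have hmin : ∫ ω, min (W ω - δ) 0 = - stdNormalPdf δ - δ * stdNormalCdf δ := by
    rw [← integral_min_gaussian_aux, ← hWl, integral_map hWm.aemeasurable]
    exact (by fun_prop : Measurable fun x : ℝ => min (x - δ) 0).aestronglyMeasurable
  have himin : Integrable (fun ω => min (W ω - δ) 0) :=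
    (hiW.sub (integrable_const δ)).inf (integrable_zero _ _ _)
  have hiL : Integrable (fun ω => σ₂ * ρ * Z₁ ω + σ₂ * s * Z₂ ω) :=
    (hi1.const_mul _).add (hi2.const_mul _)
  have hiM : Integrable (fun ω => μ₂ + (σ₂ * ρ * Z₁ ω + σ₂ * s * Z₂ ω)) :=
    (integrable_const _).add hiL
  simp_rw [hYe]
  rw [integral_add hiM (himin.const_mul _),
    integral_add (integrable_const _) hiL, integral_add (hi1.const_mul _) (hi2.const_mul _),
    integral_const_mul, integral_const_mul, integral_const_mul, hm1, hm2, hmin,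
    stdNormalCdf_neg_aux]
  simp only [integral_const, probReal_univ, smul_eq_mul]
  linear_combination (-stdNormalCdf δ) * hδθ
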